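/- Let m, v, N ∈ ℕ with 2v ≤ N, let Ω be a compact subset of ℝ^d with a Borel probability measure μ, let 1 ≤ p < ∞, and let D_N = {g_1,…,g_N} ⊂ C(Ω) be a system of N functions. For each J ⊆ {1,…,N} put X_J := span{g_i : i ∈ J}, and let Σ_k(D_N) be the union of X_J over all J with |J| = k. Assume points ξ^1,…,ξ^m ∈ Ω are such that ‖u‖_p ≤ D max_{1≤j≤m}|u(ξ^j)| for every u ∈ Σ_{2v}(D_N). Then for every f ∈ C(Ω) and every u ∈ Σ_v(D_N) satisfying max_{1≤j≤m}|f(ξ^j) − u(ξ^j)| ≤ max_{1≤j≤m}|f(ξ^j) − g(ξ^j)| for all g ∈ Σ_v(D_N), one has ‖f − u‖_p ≤ (2D + 1) σ_v(f, D_N)_∞. -/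

import Mathlib

open MeasureTheory

/-- The `L_p(μ)`-norm of a function `f`, `(∫ |f|^p dμ)^(1/p)`. -/
noncomputable def LpNorm {Ω : Type*} [MeasurableSpace Ω] (μ : Measure Ω) (p : ℝ)
    (f : Ω → ℝ) : ℝ :=
  (∫ ω, |f ω| ^ p ∂μ) ^ (1 / p)

/-- The uniform norm `sup_ω |f ω|`. -/
noncomputable def supNorm {Ω : Type*} (f : Ω → ℝ) : ℝ :=
  ⨆ ω, |f ω|

/-- `Σ_k(D_N)`: the set of `k`-term approximants with respect to the system `g`. -/
def sigmaSet {Ω : Type*} [TopologicalSpace Ω] {N : ℕ} (k : ℕ) (g : Fin N → C(Ω, ℝ)) :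
    Set C(Ω, ℝ) :=
  {u | ∃ J : Finset (Fin N), J.card = k ∧ u ∈ Submodule.span ℝ (g '' ↑J)}

/-- `σ_v(f, D_N)_∞`: the best `v`-term approximation of `f` in the uniform norm. -/
noncomputable def bestVTerm {Ω : Type*} [TopologicalSpace Ω] {N : ℕ}
    (v : ℕ) (g : Fin N → C(Ω, ℝ)) (f : C(Ω, ℝ)) : ℝ :=
  ⨅ h : sigmaSet v g, supNorm (fun ω => f ω - (h : C(Ω, ℝ)) ω)

/-!
Every `h ∈ Σ_v(D_N)` competes with `u`. Since `h - u ∈ Σ_{2v}(D_N)`, the discretization inequality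
controls `‖h - u‖_p` by the values of `h - u = (f - u) - (f - h)` at the sample points. There
`f - u` is no larger than `f - h`, which is at most `‖f - h‖_∞`, so `‖h - u‖_p ≤ 2D ‖f - h‖_∞`.
Adding `‖f - h‖_p ≤ ‖f - h‖_∞` and taking the infimum over `h` gives the bound.
-/

section LpNorm

variable {Ω : Type*} [MeasurableSpace Ω] {μ : Measure Ω} {p : ℝ} {f g h : Ω → ℝ}

theorem LpNorm_eq_lpNorm (hp : 0 < p) (hf : AEStronglyMeasurable f μ) :
    LpNorm μ p f = lpNorm f (ENNReal.ofReal p) μ := by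
  rw [lpNorm_eq_integral_norm_rpow_toReal (ENNReal.ofReal_pos.mpr hp).ne' ENNReal.ofReal_ne_top hf,
    ENNReal.toReal_ofReal hp.le, ← one_div]
  rfl

theorem LpNorm_sub_le_add (hp : 1 ≤ p) (hf : MemLp f (ENNReal.ofReal p) μ)
    (hg : MemLp g (ENNReal.ofReal p) μ) (hh : AEStronglyMeasurable h μ) :
    LpNorm μ p (f - h) ≤ LpNorm μ p (f - g) + LpNorm μ p (g - h) := by
  have hp_pos : 0 < p := zero_lt_one.trans_le hp
  rw [LpNorm_eq_lpNorm hp_pos (hf.1.sub hh), LpNorm_eq_lpNorm hp_pos (hf.1.sub hg.1),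
    LpNorm_eq_lpNorm hp_pos (hg.1.sub hh)]
  exact lpNorm_sub_le_lpNorm_sub_add_lpNorm_sub hf hg (ENNReal.one_le_ofReal.mpr hp)

theorem LpNorm_le_mul_measureReal_univ_rpow [IsFiniteMeasure μ] (hp : 0 < p)
    (hf : AEStronglyMeasurable f μ) {C : ℝ} (hC : 0 ≤ C) (hfC : ∀ ω, |f ω| ≤ C) :
    LpNorm μ p f ≤ C * μ.real Set.univ ^ (1 / p) := by
  calc LpNorm μ p f = lpNorm f (ENNReal.ofReal p) μ := LpNorm_eq_lpNorm hp hf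
    _ ≤ lpNorm (fun _ ↦ C) (ENNReal.ofReal p) μ := lpNorm_mono_real (memLp_const C) hfC
    _ = C * μ.real Set.univ ^ (1 / p) := by
      rw [lpNorm_const' (ENNReal.ofReal_pos.mpr hp).ne' ENNReal.ofReal_ne_top,
        Real.norm_of_nonneg hC, ENNReal.toReal_ofReal hp.le, one_div]

end LpNorm

section supNorm

variable {Ω ι : Type*} {a b : Ω → ℝ}

theorem supNorm_nonneg (a : Ω → ℝ) : 0 ≤ supNorm a :=
  Real.iSup_nonneg fun _ ↦ abs_nonneg _

theorem abs_le_supNorm (ha : BddAbove (Set.range fun ω ↦ |a ω|)) (ω : Ω) : |a ω| ≤ supNorm a :=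
  le_ciSup ha ω

theorem supNorm_sub_le (ha : BddAbove (Set.range fun ω ↦ |a ω|))
    (hb : BddAbove (Set.range fun ω ↦ |b ω|)) : supNorm (a - b) ≤ supNorm a + supNorm b :=
  Real.iSup_le
    (fun ω ↦ (abs_sub (a ω) (b ω)).trans (add_le_add (abs_le_supNorm ha ω) (abs_le_supNorm hb ω)))
    (add_nonneg (supNorm_nonneg a) (supNorm_nonneg b))

theorem supNorm_comp_le (ha : BddAbove (Set.range fun ω ↦ |a ω|)) (ξ : ι → Ω) :
    supNorm (a ∘ ξ) ≤ supNorm a :=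
  Real.iSup_le (fun j ↦ abs_le_supNorm ha (ξ j)) (supNorm_nonneg a)

theorem bddAbove_range_abs_continuousMap [TopologicalSpace Ω] [CompactSpace Ω] (k : C(Ω, ℝ)) :
    BddAbove (Set.range fun ω ↦ |k ω|) :=
  (isCompact_range k.continuous.abs).bddAbove

end supNorm

theorem sub_mem_sigmaSet_add {Ω : Type*} [TopologicalSpace Ω] {N j k : ℕ} (hjk : j + k ≤ N)
    {g : Fin N → C(Ω, ℝ)} {a b : C(Ω, ℝ)} (ha : a ∈ sigmaSet j g) (hb : b ∈ sigmaSet k g) :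
    a - b ∈ sigmaSet (j + k) g := by
  obtain ⟨J, rfl, haJ⟩ := ha
  obtain ⟨K, rfl, hbK⟩ := hb
  -- `J` and `K` may overlap, so their union is padded to the exact cardinality.
  obtain ⟨L, hL, hL_card⟩ := Finset.exists_superset_card_eq (Finset.card_union_le J K)
    (by simpa using hjk)
  have span_le_span {I : Finset (Fin N)} (hI : I ⊆ L) :
      Submodule.span ℝ (g '' I) ≤ Submodule.span ℝ (g '' L) :=
    Submodule.span_mono (Set.image_mono (Finset.coe_subset.mpr hI))
  exact ⟨L, hL_card, Submodule.sub_mem _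
    (span_le_span (Finset.union_subset_left hL) haJ)
    (span_le_span (Finset.union_subset_right hL) hbK)⟩

section Recovery

variable {Ω ι : Type*} [TopologicalSpace Ω] [CompactSpace Ω] {ξ : ι → Ω}

theorem supNorm_sub_comp_le_two_mul {f u h : C(Ω, ℝ)}
    (hu : supNorm (⇑(f - u) ∘ ξ) ≤ supNorm (⇑(f - h) ∘ ξ)) :
    supNorm (⇑(h - u) ∘ ξ) ≤ 2 * supNorm ⇑(f - h) := by
  have bddAbove_comp (k : C(Ω, ℝ)) : BddAbove (Set.range fun j ↦ |(k ∘ ξ) j|) :=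
    (bddAbove_range_abs_continuousMap k).mono (Set.range_comp_subset_range ξ fun ω ↦ |k ω|)
  have sub_eq : ⇑(h - u) ∘ ξ = ⇑(f - u) ∘ ξ - ⇑(f - h) ∘ ξ := by
    ext j
    simp
  calc supNorm (⇑(h - u) ∘ ξ)
      ≤ supNorm (⇑(f - u) ∘ ξ) + supNorm (⇑(f - h) ∘ ξ) :=
        sub_eq ▸ supNorm_sub_le (bddAbove_comp _) (bddAbove_comp _)
    _ ≤ 2 * supNorm (⇑(f - h) ∘ ξ) := by linarith
    _ ≤ 2 * supNorm ⇑(f - h) := by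
        gcongr
        exact supNorm_comp_le (bddAbove_range_abs_continuousMap _) ξ

variable [MeasurableSpace Ω] [OpensMeasurableSpace Ω] {μ : Measure Ω} [IsFiniteMeasure μ]
  {p D : ℝ}

theorem LpNorm_sub_le_mul_supNorm_sub (hp : 1 ≤ p) (hD : 0 ≤ D) {f u h : C(Ω, ℝ)}
    (hLDI : LpNorm μ p ⇑(h - u) ≤ D * supNorm (⇑(h - u) ∘ ξ))
    (hu : supNorm (⇑(f - u) ∘ ξ) ≤ supNorm (⇑(f - h) ∘ ξ)) :
    LpNorm μ p ⇑(f - u) ≤ (2 * D + μ.real Set.univ ^ (1 / p)) * supNorm ⇑(f - h) := by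
  have memLp (k : C(Ω, ℝ)) : MemLp k (ENNReal.ofReal p) μ :=
    .of_bound k.continuous.aestronglyMeasurable ‖k‖ (.of_forall k.norm_coe_le_norm)
  have triangle : LpNorm μ p ⇑(f - u) ≤ LpNorm μ p ⇑(f - h) + LpNorm μ p ⇑(h - u) :=
    LpNorm_sub_le_add hp (memLp f) (memLp h) u.continuous.aestronglyMeasurable
  have hfh : LpNorm μ p ⇑(f - h) ≤ supNorm ⇑(f - h) * μ.real Set.univ ^ (1 / p) :=
    LpNorm_le_mul_measureReal_univ_rpow (zero_lt_one.trans_le hp)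
      (f - h).continuous.aestronglyMeasurable (supNorm_nonneg _)
      (abs_le_supNorm (bddAbove_range_abs_continuousMap _))
  have hhu : LpNorm μ p ⇑(h - u) ≤ D * (2 * supNorm ⇑(f - h)) :=
    hLDI.trans (mul_le_mul_of_nonneg_left (supNorm_sub_comp_le_two_mul hu) hD)
  linarith

theorem stmt_16_general (hp : 1 ≤ p) {v N : ℕ} (hvN : 2 * v ≤ N) {g : Fin N → C(Ω, ℝ)}
    (hD : 0 ≤ D) (hLDI : ∀ w ∈ sigmaSet (2 * v) g, LpNorm μ p ⇑w ≤ D * supNorm (w ∘ ξ))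
    {f u : C(Ω, ℝ)} (hu_mem : u ∈ sigmaSet v g)
    (hu_min : ∀ h ∈ sigmaSet v g, supNorm (⇑(f - u) ∘ ξ) ≤ supNorm (⇑(f - h) ∘ ξ)) :
    LpNorm μ p ⇑(f - u) ≤ (2 * D + μ.real Set.univ ^ (1 / p)) * bestVTerm v g f := by
  have : Nonempty (sigmaSet v g) := ⟨⟨u, hu_mem⟩⟩
  rw [bestVTerm, Real.mul_iInf_of_nonneg (by positivity)]
  refine le_ciInf fun ⟨h, hh⟩ ↦ LpNorm_sub_le_mul_supNorm_sub hp hD ?_ (hu_min h hh)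
  rw [two_mul] at hvN hLDI
  exact hLDI _ (sub_mem_sigmaSet_add hvN hh hu_mem)

end Recovery

/-- Theorem 6.2: under the universal LDI(p,∞) for the collection `X_{2v}(D_N)`,
any `u ∈ Σ_v(D_N)` minimizing the discrete uniform distance `max_j |f(ξ^j) - g(ξ^j)|` over
`Σ_v(D_N)` satisfies `‖f - u‖_p ≤ (2D + 1) σ_v(f, D_N)_∞`. -/
theorem stmt_16 (dd : ℕ) (Ω : Set (Fin dd → ℝ)) (hΩ : IsCompact Ω)
    (μ : Measure Ω) [IsProbabilityMeasure μ]
    (p : ℝ) (hp : 1 ≤ p)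
    (m v N : ℕ) (hvN : 2 * v ≤ N)
    (g : Fin N → C(Ω, ℝ))
    (ξ : Fin m → Ω) (D : ℝ) (hD : 0 < D)
    (hLDI : ∀ u ∈ sigmaSet (2 * v) g, LpNorm μ p ⇑u ≤ D * ⨆ j, |u (ξ j)|)
    (f : C(Ω, ℝ)) (u : C(Ω, ℝ)) (hu_mem : u ∈ sigmaSet v g)
    (hu_min : ∀ h ∈ sigmaSet v g,
      (⨆ j, |f (ξ j) - u (ξ j)|) ≤ ⨆ j, |f (ξ j) - h (ξ j)|) :
    LpNorm μ p (fun ω => f ω - u ω) ≤ (2 * D + 1) * bestVTerm v g f := by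
  have : CompactSpace Ω := isCompact_iff_compactSpace.mp hΩ
  simpa using! stmt_16_general hp hvN hD.le hLDI hu_mem hu_min
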